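/- For all α, β ∈ ASP, α ⋆ β ≥ α ∘ β in Bruhat order, and equality α ⋆ β = α ∘ β holds if and only if Inv(α) ∩ Inv(β⁻¹) = ∅. -/

import Mathlib

/-!
Put `m = β n`. Then `s_{αβ}(a,b)` counts the set `C` of all `m` with `b ≤ β⁻¹ m` and `α m < a`. For every `ℓ`
the points of `C` with `m ≥ ℓ` lie in a set of size `s_α(a,ℓ)`, and those with `m < ℓ` in a set
of size `s_β(ℓ,b)`. Hence `s_{αβ}(a,b) ≤ s_α(a,ℓ) + s_β(ℓ,b)`, which gives the Bruhat
inequality. Equality at `ℓ` means that `ℓ` separates `P` from `Q` (`P < ℓ ≤ Q`), where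
`P` is the set of `m` with `α m < a` and `β⁻¹ m < b`, and `Q` the set of `m` with `a ≤ α m` and
`b ≤ β⁻¹ m` (`sF_mul_eq_iff`).

Since `P` is bounded above and `Q` below, such an `ℓ` exists iff no `q ∈ Q` lies below some
`p ∈ P`. A pair `q < p` of this kind is a common inversion of `α` and `β⁻¹`, and every common
inversion `(q, p)` arises from `a = α q`, `b = β⁻¹ q`. Finally, a permutation in `ASP` is
determined by its slipface function (`eq_of_sF_eq`), so equality of all slipface values is
equality of permutations.
-/

/-- A permutation of ℤ is almost-sign-preserving if only finitely many `n` have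
exactly one of `n`, `α n` negative. -/
def ASP (α : Equiv.Perm ℤ) : Prop := {n : ℤ | Xor' (n < 0) (α n < 0)}.Finite

/-- The slipface function `s_α(a,b) = #{n ≥ b : α n < a}`. -/
noncomputable def sF (α : Equiv.Perm ℤ) : ℤ → ℤ → ℕ :=
  fun a b => {n : ℤ | b ≤ n ∧ α n < a}.ncard

/-- The shift `χ_α = s_α(0,0) - s_{α⁻¹}(0,0)`. -/
noncomputable def shiftASP (α : Equiv.Perm ℤ) : ℤ :=
  (sF α 0 0 : ℤ) - (sF α⁻¹ 0 0 : ℤ)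

/-- Bruhat order on ASP: pointwise comparison of slipface functions. -/
def BruhatLE (α β : Equiv.Perm ℤ) : Prop := ∀ a b : ℤ, sF α a b ≤ sF β a b

/-- `α ≤_χ β`: Bruhat order together with equality of shifts. -/
def BruhatLEchi (α β : Equiv.Perm ℤ) : Prop := BruhatLE α β ∧ shiftASP α = shiftASP β

/-- `γ` is the Demazure product `α ⋆ β`:
`s_γ(a,b) = min_{ℓ} [s_α(a,ℓ) + s_β(ℓ,b)]`. -/
def IsDem (α β γ : Equiv.Perm ℤ) : Prop :=
  ∀ a b : ℤ, IsLeast {x : ℕ | ∃ ℓ : ℤ, x = sF α a ℓ + sF β ℓ b} (sF γ a b)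

/-- `γ = α ◁ β`: `s_γ(a,b) = max_ℓ [s_α(a,ℓ) - s_{β⁻¹}(b,ℓ)]`. -/
def IsTriL (α β γ : Equiv.Perm ℤ) : Prop :=
  ∀ a b : ℤ, IsGreatest {x : ℤ | ∃ ℓ : ℤ, x = (sF α a ℓ : ℤ) - (sF β⁻¹ b ℓ : ℤ)}
    ((sF γ a b : ℤ))

/-- `γ = α ▷ β`: `s_γ(a,b) = max_ℓ [s_β(ℓ,b) - s_{α⁻¹}(ℓ,a)]`. -/
def IsTriR (α β γ : Equiv.Perm ℤ) : Prop :=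
  ∀ a b : ℤ, IsGreatest {x : ℤ | ∃ ℓ : ℤ, x = (sF β ℓ b : ℤ) - (sF α⁻¹ ℓ a : ℤ)}
    ((sF γ a b : ℤ))

/-- The set of inversions of a permutation. -/
def InvSet (α : Equiv.Perm ℤ) : Set (ℤ × ℤ) := {p : ℤ × ℤ | p.1 < p.2 ∧ α p.2 < α p.1}

theorem ASP.finite_slip {α : Equiv.Perm ℤ} (hα : ASP α) (a b : ℤ) :
    {n : ℤ | b ≤ n ∧ α n < a}.Finite := by
  refine ((Set.Finite.union hα (Set.finite_Ico b 0)).union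
    ((Set.finite_Ico 0 a).preimage α.injective.injOn)).subset ?_
  rintro n ⟨h1, h2⟩
  change (((n < 0 ∧ ¬ α n < 0) ∨ (α n < 0 ∧ ¬ n < 0)) ∨ (b ≤ n ∧ n < 0)) ∨ (0 ≤ α n ∧ α n < a)
  omega

/-- Increasing `a` by one changes the slipface function exactly when the new value `a` is
attained at a position `≥ b`. -/
theorem sF_succ_ne_iff {α : Equiv.Perm ℤ} (hα : ASP α) (a b : ℤ) :
    sF α (a + 1) b ≠ sF α a b ↔ b ≤ α⁻¹ a := by
  have hsub : {n : ℤ | b ≤ n ∧ α n < a} ⊆ {n : ℤ | b ≤ n ∧ α n < a + 1} :=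
    fun n hn => ⟨hn.1, by have := hn.2; omega⟩
  constructor
  · intro h
    by_contra hb
    refine h (congrArg Set.ncard (Set.Subset.antisymm (fun n hn => ⟨hn.1, ?_⟩) hsub))
    have h1 := hn.1
    have h2 := hn.2
    rcases lt_or_ge (α n) a with h3 | h3
    · exact h3
    · have h4 : α n = a := by omega
      rw [← h4, show α⁻¹ (α n) = n by simp] at hb
      exact absurd h1 hb
  · intro hb h
    have h1 := Set.eq_of_subset_of_ncard_le hsub (le_of_eq h) (hα.finite_slip _ _)
    have h2 : α⁻¹ a ∈ {n : ℤ | b ≤ n ∧ α n < a} := by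
      rw [h1]
      exact ⟨hb, by simp⟩
    have h3 := h2.2
    simp at h3

theorem eq_of_sF_eq {α γ : Equiv.Perm ℤ} (hα : ASP α) (hγ : ASP γ)
    (h : ∀ a b, sF γ a b = sF α a b) : γ = α := by
  have key : ∀ a b : ℤ, b ≤ γ⁻¹ a ↔ b ≤ α⁻¹ a := fun a b => by
    rw [← sF_succ_ne_iff hγ, ← sF_succ_ne_iff hα, h, h]
  exact inv_injective (Equiv.ext fun a =>
    le_antisymm ((key a _).1 le_rfl) ((key a _).2 le_rfl))

theorem sF_eq_ncard_image (β : Equiv.Perm ℤ) (l b : ℤ) :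
    sF β l b = {m : ℤ | m < l ∧ b ≤ β⁻¹ m}.ncard := by
  unfold sF
  rw [← Set.ncard_image_of_injective _ β.injective]
  congr 1
  ext m
  simp only [Set.mem_image, Set.mem_ofPred_eq]
  constructor
  · rintro ⟨n, ⟨h1, h2⟩, rfl⟩
    exact ⟨h2, by simpa using h1⟩
  · rintro ⟨h1, h2⟩
    exact ⟨β⁻¹ m, ⟨h2, by simpa using h1⟩, by simp⟩

theorem ASP.finite_slip_image {β : Equiv.Perm ℤ} (hβ : ASP β) (l b : ℤ) :
    {m : ℤ | m < l ∧ b ≤ β⁻¹ m}.Finite := by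
  refine ((hβ.finite_slip l b).image β).subset ?_
  rintro m ⟨h1, h2⟩
  exact ⟨β⁻¹ m, ⟨h2, by simpa using h1⟩, by simp⟩

theorem sF_mul_eq_ncard (α β : Equiv.Perm ℤ) (a b : ℤ) :
    sF (α * β) a b = {m : ℤ | b ≤ β⁻¹ m ∧ α m < a}.ncard := by
  unfold sF
  rw [← Set.ncard_image_of_injective _ β.injective]
  congr 1
  ext m
  simp only [Set.mem_image, Set.mem_ofPred_eq]
  constructor
  · rintro ⟨n, ⟨h1, h2⟩, rfl⟩
    exact ⟨by simpa using h1, h2⟩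
  · rintro ⟨h1, h2⟩
    exact ⟨β⁻¹ m, ⟨h1, by simpa using h2⟩, by simp⟩

theorem sF_add_eq_ncard_union {α β : Equiv.Perm ℤ} (hα : ASP α) (hβ : ASP β) (a b l : ℤ) :
    sF α a l + sF β l b =
      ({m : ℤ | l ≤ m ∧ α m < a} ∪ {m : ℤ | m < l ∧ b ≤ β⁻¹ m}).ncard := by
  rw [sF_eq_ncard_image β, Set.ncard_union_eq _ (hα.finite_slip a l) (hβ.finite_slip_image l b)]
  · rfl
  · rw [Set.disjoint_left]
    rintro m ⟨h1, -⟩ ⟨h2, -⟩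
    omega

theorem slip_mul_subset (α β : Equiv.Perm ℤ) (a b l : ℤ) :
    {m : ℤ | b ≤ β⁻¹ m ∧ α m < a} ⊆
      {m : ℤ | l ≤ m ∧ α m < a} ∪ {m : ℤ | m < l ∧ b ≤ β⁻¹ m} := by
  rintro m ⟨h1, h2⟩
  rcases le_or_gt l m with h | h
  · exact Or.inl ⟨h, h2⟩
  · exact Or.inr ⟨h, h1⟩

theorem sF_mul_le {α β : Equiv.Perm ℤ} (hα : ASP α) (hβ : ASP β) (a b l : ℤ) :
    sF (α * β) a b ≤ sF α a l + sF β l b := by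
  rw [sF_mul_eq_ncard, sF_add_eq_ncard_union hα hβ]
  exact Set.ncard_le_ncard (slip_mul_subset α β a b l)
    ((hα.finite_slip a l).union (hβ.finite_slip_image l b))

/-- Equality at `l` holds exactly when `l` separates the points `m` where both `α m < a` and
`β⁻¹ m < b` from those where neither holds. -/
theorem sF_mul_eq_iff {α β : Equiv.Perm ℤ} (hα : ASP α) (hβ : ASP β) (a b l : ℤ) :
    sF (α * β) a b = sF α a l + sF β l b ↔
      (∀ m, α m < a → β⁻¹ m < b → m < l) ∧ (∀ m, a ≤ α m → b ≤ β⁻¹ m → l ≤ m) := by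
  rw [sF_mul_eq_ncard, sF_add_eq_ncard_union hα hβ]
  constructor
  · intro h
    have hE := Set.eq_of_subset_of_ncard_le (slip_mul_subset α β a b l) h.ge
      ((hα.finite_slip a l).union (hβ.finite_slip_image l b))
    refine ⟨fun m h1 h2 => ?_, fun m h1 h2 => ?_⟩
    · by_contra hm
      have h3 : m ∈ {m : ℤ | b ≤ β⁻¹ m ∧ α m < a} := hE ▸ Or.inl ⟨not_lt.1 hm, h1⟩
      exact absurd h3.1 (not_le.2 h2)
    · by_contra hm
      have h3 : m ∈ {m : ℤ | b ≤ β⁻¹ m ∧ α m < a} := hE ▸ Or.inr ⟨not_le.1 hm, h2⟩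
      exact absurd h3.2 (not_lt.2 h1)
  · rintro ⟨hP, hQ⟩
    congr 1
    refine Set.Subset.antisymm (slip_mul_subset α β a b l) ?_
    rintro m (⟨h1, h2⟩ | ⟨h1, h2⟩)
    · exact ⟨not_lt.1 fun h => absurd (hP m h2 h) (not_lt.2 h1), h2⟩
    · exact ⟨h2, not_le.1 fun h => absurd (hQ m h h2) (not_le.2 h1)⟩

/-- Two sets of integers, one bounded above and lying strictly below the other, which is bounded
below, are separated by an integer. Either set may be empty. -/
theorem exists_separator {P Q : Set ℤ} (hP : BddAbove P) (hQ : BddBelow Q)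
    (h : ∀ p ∈ P, ∀ q ∈ Q, p < q) : ∃ l, (∀ p ∈ P, p < l) ∧ ∀ q ∈ Q, l ≤ q := by
  rcases Q.eq_empty_or_nonempty with rfl | hne
  · obtain ⟨M, hM⟩ := hP
    exact ⟨M + 1, fun p hp => Int.lt_add_one_of_le (hM hp), by simp⟩
  · exact ⟨sInf Q, fun p hp => h p hp _ (Int.csInf_mem hne hQ), fun q hq => csInf_le hQ hq⟩

theorem exists_sF_mul_eq {α β : Equiv.Perm ℤ} (hα : ASP α) (hβ : ASP β)
    (hinv : InvSet α ∩ InvSet β⁻¹ = ∅) (a b : ℤ) :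
    ∃ l, sF (α * β) a b = sF α a l + sF β l b := by
  have hP : BddAbove {m | α m < a ∧ β⁻¹ m < b} := by
    obtain ⟨M, hM⟩ := (hα.finite_slip a 0).bddAbove
    refine ⟨max M 0, fun m hm => ?_⟩
    rcases le_or_gt 0 m with h | h
    · exact le_max_of_le_left (hM ⟨h, hm.1⟩)
    · exact le_max_of_le_right h.le
  have hQ : BddBelow {m | a ≤ α m ∧ b ≤ β⁻¹ m} := by
    obtain ⟨M, hM⟩ := (hβ.finite_slip_image 0 b).bddBelow
    refine ⟨min M 0, fun m hm => ?_⟩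
    rcases lt_or_ge m 0 with h | h
    · exact min_le_of_left_le (hM ⟨h, hm.2⟩)
    · exact min_le_of_right_le h
  have hPQ : ∀ p ∈ {m | α m < a ∧ β⁻¹ m < b}, ∀ q ∈ {m | a ≤ α m ∧ b ≤ β⁻¹ m}, p < q := by
    rintro p ⟨hp1, hp2⟩ q ⟨hq1, hq2⟩
    by_contra hpq
    have hne : q ≠ p := by
      rintro rfl
      omega
    have hlt : q < p := by omega
    have hmem : (q, p) ∈ InvSet α ∩ InvSet β⁻¹ :=
      ⟨⟨hlt, hp1.trans_le hq1⟩, ⟨hlt, hp2.trans_le hq2⟩⟩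
    rw [hinv] at hmem
    exact hmem
  obtain ⟨l, h1, h2⟩ := exists_separator hP hQ hPQ
  exact ⟨l, (sF_mul_eq_iff hα hβ a b l).2
    ⟨fun m hm hm' => h1 m ⟨hm, hm'⟩, fun m hm hm' => h2 m ⟨hm, hm'⟩⟩⟩

theorem ASP.mul {α β : Equiv.Perm ℤ} (hα : ASP α) (hβ : ASP β) : ASP (α * β) := by
  refine (Set.Finite.union hβ (Set.Finite.preimage β.injective.injOn hα)).subset ?_
  intro n hn
  change (n < 0 ∧ ¬ α (β n) < 0) ∨ (α (β n) < 0 ∧ ¬ n < 0) at hn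
  change ((n < 0 ∧ ¬ β n < 0) ∨ (β n < 0 ∧ ¬ n < 0)) ∨
    ((β n < 0 ∧ ¬ α (β n) < 0) ∨ (α (β n) < 0 ∧ ¬ β n < 0))
  omega

/-- `α ⋆ β ≥ α ∘ β` in Bruhat order, with equality iff `Inv(α) ∩ Inv(β⁻¹) = ∅`. -/
theorem star_ge_comp (α β : Equiv.Perm ℤ) (hα : ASP α) (hβ : ASP β)
    (γ : Equiv.Perm ℤ) (hγ : ASP γ) (hdem : IsDem α β γ) :
    BruhatLE (α * β) γ ∧ (γ = α * β ↔ InvSet α ∩ InvSet β⁻¹ = ∅) := by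
  refine ⟨fun a b => ?_, ?_, ?_⟩
  · obtain ⟨⟨l, hl⟩, -⟩ := hdem a b
    rw [hl]
    exact sF_mul_le hα hβ a b l
  · intro h
    rw [Set.eq_empty_iff_forall_notMem]
    rintro ⟨q, p⟩ ⟨⟨hqp, h1⟩, -, h2⟩
    -- The pair `q < p` cannot be separated when the thresholds are the values at `q`.
    obtain ⟨⟨l, hl⟩, -⟩ := hdem (α q) (β⁻¹ q)
    rw [h] at hl
    obtain ⟨hP, hQ⟩ := (sF_mul_eq_iff hα hβ _ _ l).1 hl
    exact absurd ((hP p h1 h2).trans_le (hQ q le_rfl le_rfl)) (not_lt.2 (le_of_lt hqp))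
  · intro hinv
    refine eq_of_sF_eq (hα.mul hβ) hγ fun a b => ?_
    obtain ⟨⟨l, hl⟩, hmin⟩ := hdem a b
    obtain ⟨l', hl'⟩ := exists_sF_mul_eq hα hβ hinv a b
    exact le_antisymm (hl' ▸ hmin ⟨l', rfl⟩) (hl ▸ sF_mul_le hα hβ a b l)
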